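/- Let n₀ ≥ 1, L ≥ 1, n_L ≥ 1, and n₁, …, n_{L−1} be integers with n_l ≥ n₀ for every l ∈ {1, …, L−1}, and let μ denote Lebesgue measure on ℝ^{n₀}. Then there exist affine maps A_l : ℝ^{n_{l−1}} → ℝ^{n_l} for l = 1, …, L such that the function F := A_L ∘ ρ_{L−1} ∘ A_{L−1} ∘ ⋯ ∘ ρ_1 ∘ A_1 — where each ρ_l : ℝ^{n_l} → ℝ^{n_l} applies x ↦ max(0, x) to each coordinate — satisfies: for every measurable set U ⊆ [0, 1]^{n₀} with μ(U) > ∏_{l=1}^{L−1} ⌊n_l/n₀⌋^{−n₀}, there is no affine map A : ℝ^{n₀} → ℝ^{n_L} with F(x) = A(x) for all x ∈ U. -/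

import Mathlib

open MeasureTheory ENNReal

/-- An `(L+1)`-affine-layer ReLU network: `reluNet d A L = A_L ∘ ρ ∘ A_{L-1} ∘ ⋯ ∘ ρ ∘ A_0`,
where `ρ` applies `x ↦ max 0 x` to each coordinate and `A l : ℝ^{d l} → ℝ^{d (l+1)}` are
affine maps. -/
noncomputable def reluNet (d : ℕ → ℕ)
    (A : ∀ l : ℕ, (Fin (d l) → ℝ) →ᵃ[ℝ] (Fin (d (l + 1)) → ℝ)) :
    ∀ L : ℕ, (Fin (d 0) → ℝ) → (Fin (d (L + 1)) → ℝ)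
  | 0 => fun x => A 0 x
  | L + 1 => fun x => A (L + 1) (fun j => max 0 (reluNet d A L x j))

/-!
Split the units of each hidden layer into `d 0` groups of `p = ⌊d l / d 0⌋`. The ReLUs of one group
can be combined into a triangle wave that folds `[0, 1]` `p` times onto itself, and composing
foldings of multiplicities `p` and `q` gives the folding of multiplicity `p * q`. Hence the last
hidden layer provides `triangleWave (P * x i)` for every `i`, where `P` is the product of the
`⌊d l / d 0⌋`, and these functions are affine on each of the `P ^ d 0` cubes of side `P⁻¹`.

What remains is to keep the output layer from agreeing with one affine map on several cubes. It
outputs `∑ i, c i * triangleWave (P * x i)` with coefficients linearly independent over `ℤ`. The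
affine functionals of the cubes then differ pairwise, since their values at `0` are different
integer combinations of the `c i`. An affine map therefore coincides with at most one of them, and
agrees with each of the others only on a null set.
-/

/-- The triangle wave of period `2` with peak value `1`, i.e. the distance from `t` to the nearest
even integer. The norm on the circle of circumference `2` makes periodicity and evenness
immediate. -/
noncomputable def triangleWave (t : ℝ) : ℝ := ‖(t : AddCircle (2 : ℝ))‖

theorem triangleWave_mem_Icc (t : ℝ) : triangleWave t ∈ Set.Icc (0 : ℝ) 1 :=
  ⟨norm_nonneg _, by
    simpa [triangleWave] using AddCircle.norm_le_half_period (2 : ℝ) (x := t) two_ne_zero⟩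

theorem coe_sub_intCast_mul_two (t : ℝ) (m : ℤ) :
    ((t - m * 2 : ℝ) : AddCircle (2 : ℝ)) = t := by
  rw [AddCircle.coe_sub, sub_eq_self, AddCircle.coe_eq_zero_iff]
  exact ⟨m, zsmul_eq_mul 2 m⟩

theorem triangleWave_eq_abs_sub {t : ℝ} {m : ℤ} (h : |t - m * 2| ≤ 1) :
    triangleWave t = |t - m * 2| := by
  rw [triangleWave, ← coe_sub_intCast_mul_two t m, AddCircle.norm_coe_eq_abs_iff _ two_ne_zero]
  simpa using h

theorem coe_triangleWave (t : ℝ) :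
    (triangleWave t : AddCircle (2 : ℝ)) = t ∨ (triangleWave t : AddCircle (2 : ℝ)) = -t := by
  rw [triangleWave, AddCircle.norm_eq]
  rcases abs_choice (t - round ((2 : ℝ)⁻¹ * t) * 2) with h | h <;> rw [h]
  · exact .inl (coe_sub_intCast_mul_two t _)
  · exact .inr (by rw [AddCircle.coe_neg, coe_sub_intCast_mul_two])

theorem triangleWave_natCast_mul_triangleWave (p : ℕ) (t : ℝ) :
    triangleWave (p * triangleWave t) = triangleWave (p * t) := by
  have hmul (s : ℝ) : triangleWave (p * s) = ‖p • (s : AddCircle (2 : ℝ))‖ := by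
    rw [triangleWave, ← nsmul_eq_mul, AddCircle.coe_nsmul]
  rw [hmul, hmul]
  rcases coe_triangleWave t with h | h <;> rw [h]
  rw [smul_neg, norm_neg]

/-- The value at `0` of the affine function that agrees with `triangleWave` on `[k, k + 1]`; its
slope is `(-1) ^ k`. -/
def branchIntercept (k : ℕ) : ℤ := if Even k then -k else k + 1

theorem branchIntercept_injective : Function.Injective branchIntercept := by
  intro a b h
  unfold branchIntercept at h
  split_ifs at h <;> omega

theorem triangleWave_eq_of_mem_Icc {k : ℕ} {t : ℝ} (ht : t ∈ Set.Icc (k : ℝ) (k + 1)) :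
    triangleWave t = (-1) ^ k * t + branchIntercept k := by
  obtain ⟨h₀, h₁⟩ := ht
  rcases Nat.even_or_odd' k with ⟨m, rfl | rfl⟩ <;> push_cast at h₀ h₁
  · have h : |t - (m : ℤ) * 2| = t - (m : ℤ) * 2 := abs_of_nonneg (by push_cast; linarith)
    rw [triangleWave_eq_abs_sub (m := m) (by rw [h]; push_cast; linarith), h,
      branchIntercept, if_pos (even_two_mul m), (even_two_mul m).neg_one_pow]
    push_cast
    ring
  · have hodd : Odd (2 * m + 1) := odd_two_mul_add_one m
    have h : |t - (m + 1 : ℤ) * 2| = -(t - (m + 1 : ℤ) * 2) :=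
      abs_of_nonpos (by push_cast; linarith)
    rw [triangleWave_eq_abs_sub (m := m + 1) (by rw [h]; push_cast; linarith), h,
      branchIntercept, if_neg (Nat.not_even_iff_odd.2 hodd), hodd.neg_one_pow]
    push_cast
    ring

theorem triangleWave_of_mem_Icc {t : ℝ} (ht : t ∈ Set.Icc (0 : ℝ) 1) : triangleWave t = t := by
  simpa [branchIntercept] using triangleWave_eq_of_mem_Icc (k := 0) (by simpa using ht)

theorem exists_mem_Icc_natCast {p : ℕ} (hp : 0 < p) {t : ℝ} (ht : t ∈ Set.Icc (0 : ℝ) p) :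
    ∃ k : Fin p, t ∈ Set.Icc (k : ℝ) (k + 1) := by
  rcases ht.2.lt_or_eq with h | rfl
  · exact ⟨⟨⌊t⌋₊, (Nat.floor_lt ht.1).2 h⟩, Nat.floor_le ht.1, (Nat.lt_floor_add_one t).le⟩
  · exact ⟨⟨p - 1, by omega⟩, by simp [Nat.cast_pred hp]⟩

/-- The coefficient of `max 0 (t - j)` in the expansion of `triangleWave` on `[0, p]` as a sum of
ReLUs: the jump in slope at `j`, where the slope to the left of `0` counts as `0`. -/
noncomputable def sawtoothWeight (j : ℕ) : ℝ := if j = 0 then 1 else 2 * (-1) ^ j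

theorem sum_sawtoothWeight_mul_sub (t : ℝ) (k : ℕ) :
    ∑ j ∈ Finset.range (k + 1), sawtoothWeight j * (t - j) =
      (-1) ^ k * t + branchIntercept k := by
  induction k with
  | zero => simp [sawtoothWeight, branchIntercept]
  | succ k ih =>
    rw [Finset.sum_range_succ, ih, sawtoothWeight, if_neg k.succ_ne_zero]
    rcases Nat.even_or_odd k with hk | hk
    · rw [branchIntercept, branchIntercept, if_pos hk, if_neg (Nat.not_even_iff_odd.2 hk.add_one),
        hk.neg_one_pow, hk.add_one.neg_one_pow]
      push_cast
      ring
    · rw [branchIntercept, branchIntercept, if_neg (Nat.not_even_iff_odd.2 hk), if_pos hk.add_one,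
        hk.neg_one_pow, hk.add_one.neg_one_pow]
      push_cast
      ring

theorem sum_sawtoothWeight_mul_relu {p : ℕ} (hp : 0 < p) {t : ℝ} (ht : t ∈ Set.Icc (0 : ℝ) p) :
    ∑ j ∈ Finset.range p, sawtoothWeight j * max 0 (t - j) = triangleWave t := by
  obtain ⟨k, hk⟩ := exists_mem_Icc_natCast hp ht
  have inactive : ∀ j ∈ Finset.range p, j ∉ Finset.range (k + 1) →
      sawtoothWeight j * max 0 (t - j) = 0 := fun j _ hj => by
    have : ((k + 1 : ℕ) : ℝ) ≤ j := by exact_mod_cast not_lt.1 (mt Finset.mem_range.2 hj)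
    push_cast at this
    rw [max_eq_left (by linarith [hk.2]), mul_zero]
  have active : ∀ j ∈ Finset.range (k + 1 : ℕ),
      sawtoothWeight j * max 0 (t - j) = sawtoothWeight j * (t - j) := fun j hj => by
    have : (j : ℝ) ≤ (k : ℕ) := by exact_mod_cast Nat.lt_succ_iff.1 (Finset.mem_range.1 hj)
    rw [max_eq_right (by linarith [hk.1])]
  calc ∑ j ∈ Finset.range p, sawtoothWeight j * max 0 (t - j)
      = ∑ j ∈ Finset.range (k + 1), sawtoothWeight j * max 0 (t - j) :=
        (Finset.sum_subset (Finset.range_subset_range.2 k.2) inactive).symm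
    _ = ∑ j ∈ Finset.range (k + 1), sawtoothWeight j * (t - j) := Finset.sum_congr rfl active
    _ = triangleWave t := by
        rw [sum_sawtoothWeight_mul_sub, triangleWave_eq_of_mem_Icc hk]

/-- The affine half of a folding layer `ℝⁿ → ℝᵐ`: with `p = ⌊m / n⌋`, unit `j * n + i` receives
the argument `p * y i - j` of the `j`-th ReLU in the expansion of `triangleWave (p * y i)`. -/
noncomputable def foldEncode (n m : ℕ) [NeZero n] : (Fin n → ℝ) →ᵃ[ℝ] (Fin m → ℝ) :=
  AffineMap.pi fun k =>
    ((m / n : ℕ) : ℝ) • (LinearMap.proj (Fin.ofNat n k) : (Fin n → ℝ) →ₗ[ℝ] ℝ).toAffineMap -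
      AffineMap.const ℝ (Fin n → ℝ) (((k : ℕ) / n : ℕ) : ℝ)

theorem foldEncode_apply (n m : ℕ) [NeZero n] (y : Fin n → ℝ) (k : Fin m) :
    foldEncode n m y k = (m / n : ℕ) * y (Fin.ofNat n k) - ((k : ℕ) / n : ℕ) := by
  simp [foldEncode]

/-- The linear recombination of the units `j * n + i`, `j < ⌊m / n⌋`, of a layer of width `m` into
the `i`-th of `n` coordinates; it is absorbed into the affine map of the following layer. The
remaining `m % n` units are ignored. -/
noncomputable def foldDecode (m n : ℕ) : (Fin m → ℝ) →ₗ[ℝ] (Fin n → ℝ) :=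
  LinearMap.pi fun i => ∑ j : Fin (m / n), sawtoothWeight j •
    LinearMap.proj (Fin.castLE (Nat.div_mul_le_self m n) (finProdFinEquiv (j, i)))

theorem foldDecode_apply (m n : ℕ) (v : Fin m → ℝ) (i : Fin n) :
    foldDecode m n v i = ∑ j : Fin (m / n),
      sawtoothWeight j * v (Fin.castLE (Nat.div_mul_le_self m n) (finProdFinEquiv (j, i))) := by
  simp [foldDecode]

theorem foldDecode_self (n : ℕ) : foldDecode n n = LinearMap.id := by
  refine LinearMap.ext fun v => funext fun i => ?_
  have hdiv : n / n = 1 := Nat.div_self i.pos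
  rw [foldDecode_apply, Fintype.sum_eq_single ⟨0, by omega⟩ fun j hj => ?_]
  · rw [sawtoothWeight, if_pos rfl, one_mul, LinearMap.id_apply]
    exact congrArg v (Fin.ext (by simp))
  · exact absurd (Fin.ext (by simp only; omega)) hj

theorem foldDecode_relu_foldEncode {n m : ℕ} [NeZero n] (hnm : n ≤ m) {y : Fin n → ℝ} (i : Fin n)
    (hy : y i ∈ Set.Icc (0 : ℝ) 1) :
    foldDecode m n (fun k => max 0 (foldEncode n m y k)) i = triangleWave ((m / n : ℕ) * y i) := by
  have hp : 0 < m / n := Nat.div_pos hnm i.pos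
  have hmem : ((m / n : ℕ) : ℝ) * y i ∈ Set.Icc (0 : ℝ) (m / n : ℕ) :=
    ⟨mul_nonneg (Nat.cast_nonneg _) hy.1, mul_le_of_le_one_right (Nat.cast_nonneg _) hy.2⟩
  rw [foldDecode_apply, ← sum_sawtoothWeight_mul_relu hp hmem, ← Fin.sum_univ_eq_sum_range
    fun j => sawtoothWeight j * max 0 (((m / n : ℕ) : ℝ) * y i - j)]
  refine Fintype.sum_congr _ _ fun j => ?_
  have hcoord : Fin.ofNat n (i + n * j) = i :=
    Fin.ext (by simp [Nat.mod_eq_of_lt i.2])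
  have hblock : (i + n * j : ℕ) / n = j := by
    rw [Nat.add_mul_div_left _ _ i.pos, Nat.div_eq_of_lt i.2, zero_add]
  simp only [foldEncode_apply, Fin.val_castLE, finProdFinEquiv_apply_val, hcoord, hblock]

/-- The vector fed into the affine map `A l` on input `x`: the input itself for `l = 0`, and the
rectified output of layer `l - 1` otherwise. -/
noncomputable def activation (d : ℕ → ℕ)
    (A : ∀ l : ℕ, (Fin (d l) → ℝ) →ᵃ[ℝ] (Fin (d (l + 1)) → ℝ)) (x : Fin (d 0) → ℝ) :
    ∀ l : ℕ, Fin (d l) → ℝ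
  | 0 => x
  | l + 1 => fun j => max 0 (reluNet d A l x j)

theorem reluNet_eq_apply_activation (d : ℕ → ℕ)
    (A : ∀ l : ℕ, (Fin (d l) → ℝ) →ᵃ[ℝ] (Fin (d (l + 1)) → ℝ)) (x : Fin (d 0) → ℝ) (l : ℕ) :
    reluNet d A l x = A l (activation d A x l) := by
  cases l <;> rfl

/-- The affine maps of a network whose first `N` layers fold every coordinate and whose layer `N`
outputs, in every coordinate, the linear combination of the folded coordinates with
coefficients `c`. -/
noncomputable def foldingLayers (d : ℕ → ℕ) [NeZero (d 0)] (c : Fin (d 0) → ℝ) (N : ℕ) :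
    ∀ l : ℕ, (Fin (d l) → ℝ) →ᵃ[ℝ] (Fin (d (l + 1)) → ℝ) :=
  Function.update
    (fun l => (foldEncode (d 0) (d (l + 1))).comp (foldDecode (d l) (d 0)).toAffineMap) N
    ((LinearMap.pi fun _ => Fintype.linearCombination ℝ c) ∘ₗ foldDecode (d N) (d 0)).toAffineMap

section FoldingNetwork

variable {d : ℕ → ℕ} [NeZero (d 0)] (c : Fin (d 0) → ℝ) {N : ℕ} {x : Fin (d 0) → ℝ}

theorem foldingLayers_of_ne {l : ℕ} (hl : l ≠ N) (v : Fin (d l) → ℝ) :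
    foldingLayers d c N l v = foldEncode (d 0) (d (l + 1)) (foldDecode (d l) (d 0) v) := by
  rw [foldingLayers, Function.update_of_ne hl, AffineMap.comp_apply, LinearMap.coe_toAffineMap]

theorem foldingLayers_self (v : Fin (d N) → ℝ) (k : Fin (d (N + 1))) :
    foldingLayers d c N N v k = ∑ i, foldDecode (d N) (d 0) v i * c i := by
  rw [foldingLayers, Function.update_self, LinearMap.coe_toAffineMap, LinearMap.comp_apply,
    LinearMap.pi_apply, Fintype.linearCombination_apply]
  simp only [smul_eq_mul]

theorem foldDecode_activation_foldingLayers (hd : ∀ l, 1 ≤ l → l ≤ N → d 0 ≤ d l)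
    (hx : x ∈ Set.Icc (0 : Fin (d 0) → ℝ) 1) {l : ℕ} (hl : l ≤ N) :
    foldDecode (d l) (d 0) (activation d (foldingLayers d c N) x l) =
      fun i => triangleWave ((∏ j ∈ Finset.Icc 1 l, d j / d 0 : ℕ) * x i) := by
  induction l with
  | zero =>
    funext i
    simp [activation, foldDecode_self, triangleWave_of_mem_Icc ⟨hx.1 i, hx.2 i⟩]
  | succ l ih =>
    funext i
    have hlayer : reluNet d (foldingLayers d c N) l x = foldEncode (d 0) (d (l + 1))
        fun i => triangleWave ((∏ j ∈ Finset.Icc 1 l, d j / d 0 : ℕ) * x i) := by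
      rw [reluNet_eq_apply_activation, foldingLayers_of_ne c (by omega), ih (by omega)]
    rw [activation, hlayer,
      foldDecode_relu_foldEncode (hd _ (by omega) hl) i (triangleWave_mem_Icc _),
      triangleWave_natCast_mul_triangleWave, Finset.prod_Icc_succ_top (by omega), ← mul_assoc,
      ← Nat.cast_mul, mul_comm (d (l + 1) / d 0)]

theorem reluNet_foldingLayers (hd : ∀ l, 1 ≤ l → l ≤ N → d 0 ≤ d l)
    (hx : x ∈ Set.Icc (0 : Fin (d 0) → ℝ) 1) (k : Fin (d (N + 1))) :
    reluNet d (foldingLayers d c N) N x k =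
      ∑ i, triangleWave ((∏ j ∈ Finset.Icc 1 N, d j / d 0 : ℕ) * x i) * c i := by
  rw [reluNet_eq_apply_activation, foldingLayers_self,
    foldDecode_activation_foldingLayers c hd hx le_rfl]

end FoldingNetwork

section Agreement

variable {E F : Type*} [NormedAddCommGroup E] [NormedSpace ℝ E] [MeasurableSpace E] [BorelSpace E]
  [FiniteDimensional ℝ E] [AddCommGroup F] [Module ℝ F] (μ : Measure E) [μ.IsAddHaarMeasure]

theorem addHaar_setOf_affineMap_eq {f g : E →ᵃ[ℝ] F} (hfg : f ≠ g) : μ {x | f x = g x} = 0 := by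
  let S : AffineSubspace ℝ E := (AffineSubspace.mk' (0 : F) ⊥).comap (f - g)
  have hS (x : E) : x ∈ S ↔ f x = g x := by
    simp [S, AffineSubspace.mem_comap, AffineSubspace.mem_mk', sub_eq_zero]
  have hS_coe : {x | f x = g x} = S := Set.ext fun x => (hS x).symm
  rw [hS_coe]
  refine Measure.addHaar_affineSubspace μ S fun htop => hfg ?_
  ext x
  exact (hS x).1 (htop ▸ AffineSubspace.mem_top ℝ E x)

theorem addHaar_iUnion_setOf_affineMap_eq_le {ι : Type*} [Countable ι] {f : ι → E →ᵃ[ℝ] F}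
    (hf : Function.Injective f) {s : ι → Set E} {v : ℝ≥0∞} (hs : ∀ i, μ (s i) ≤ v)
    (g : E →ᵃ[ℝ] F) : μ (⋃ i, {x ∈ s i | f i x = g x}) ≤ v := by
  have hnull {i : ι} (hi : f i ≠ g) : μ {x ∈ s i | f i x = g x} = 0 :=
    measure_mono_null (fun _ hx => hx.2) (addHaar_setOf_affineMap_eq μ hi)
  by_cases hg : ∃ i₀, f i₀ = g
  · obtain ⟨i₀, rfl⟩ := hg
    calc μ (⋃ i, {x ∈ s i | f i x = f i₀ x})
        ≤ ∑' i, μ {x ∈ s i | f i x = f i₀ x} := measure_iUnion_le _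
      _ = μ {x ∈ s i₀ | f i₀ x = f i₀ x} := tsum_eq_single i₀ fun i hi => hnull (hf.ne hi)
      _ ≤ v := (measure_mono (Set.sep_subset _ _)).trans (hs i₀)
  · rw [measure_iUnion_null fun i => hnull fun hi => hg ⟨i, hi⟩]
    exact zero_le

end Agreement

theorem exists_linearIndependent_int_real (n : ℕ) : ∃ c : Fin n → ℝ, LinearIndependent ℤ c := by
  have hrank : (n : Cardinal) ≤ Module.rank ℚ ℝ := by
    rw [Real.rank_rat_real]
    exact Cardinal.natCast_le_aleph0.trans Cardinal.aleph0_le_continuum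
  obtain ⟨c, hc⟩ := Module.le_rank_iff.1 hrank
  exact ⟨c, hc.restrict_scalars (by simpa using Int.cast_injective)⟩

section Cells

variable {n P : ℕ}

/-- The cell with index `K` of the subdivision of `[0, 1]ⁿ` into `Pⁿ` cubes of side `P⁻¹`. -/
def gridCell (K : Fin n → Fin P) : Set (Fin n → ℝ) :=
  Set.Icc (fun i => (K i : ℝ) / P) fun i => ((K i : ℝ) + 1) / P

theorem mem_gridCell (hP : 0 < P) {K : Fin n → Fin P} {x : Fin n → ℝ} :
    x ∈ gridCell K ↔ ∀ i, (P : ℝ) * x i ∈ Set.Icc (K i : ℝ) (K i + 1) := by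
  have hP' : (0 : ℝ) < P := Nat.cast_pos.2 hP
  simp only [gridCell, Set.mem_Icc, Pi.le_def, div_le_iff₀' hP', le_div_iff₀' hP', forall_and]

theorem volume_gridCell (hP : 0 < P) (K : Fin n → Fin P) :
    volume (gridCell K) = ((P : ℝ≥0∞) ^ n)⁻¹ := by
  have hside (i : Fin n) : ((K i : ℝ) + 1) / P - K i / P = (P : ℝ)⁻¹ := by ring
  simp only [gridCell, Real.volume_Icc_pi, hside, Finset.prod_const, Finset.card_univ,
    Fintype.card_fin, ENNReal.ofReal_inv_of_pos (Nat.cast_pos.2 hP), ENNReal.ofReal_natCast,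
    ENNReal.inv_pow]

theorem exists_mem_gridCell (hP : 0 < P) {x : Fin n → ℝ} (hx : x ∈ Set.Icc (0 : Fin n → ℝ) 1) :
    ∃ K : Fin n → Fin P, x ∈ gridCell K := by
  have hmem (i : Fin n) : (P : ℝ) * x i ∈ Set.Icc (0 : ℝ) P :=
    ⟨mul_nonneg (Nat.cast_nonneg _) (hx.1 i), mul_le_of_le_one_right (Nat.cast_nonneg _) (hx.2 i)⟩
  choose K hK using fun i => exists_mem_Icc_natCast hP (hmem i)
  exact ⟨K, (mem_gridCell hP).2 hK⟩

/-- The affine functional that `∑ i, triangleWave (P * x i) * c i` restricts to on the cell with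
index `K`. -/
noncomputable def cellBranch (c : Fin n → ℝ) (K : Fin n → Fin P) : (Fin n → ℝ) →ᵃ[ℝ] ℝ :=
  (Fintype.linearCombination ℝ c).toAffineMap.comp <| AffineMap.pi fun i =>
    ((-1) ^ (K i : ℕ) * P : ℝ) • (LinearMap.proj i : (Fin n → ℝ) →ₗ[ℝ] ℝ).toAffineMap +
      AffineMap.const ℝ (Fin n → ℝ) (branchIntercept (K i) : ℝ)

theorem cellBranch_apply (c : Fin n → ℝ) (K : Fin n → Fin P) (x : Fin n → ℝ) :
    cellBranch c K x = ∑ i, ((-1) ^ (K i : ℕ) * (P * x i) + branchIntercept (K i)) * c i := by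
  simp [cellBranch, Fintype.linearCombination_apply, mul_assoc]

theorem cellBranch_injective {c : Fin n → ℝ} (hc : LinearIndependent ℤ c) :
    Function.Injective (cellBranch (P := P) c) := by
  intro K K' h
  have hzero (K : Fin n → Fin P) : cellBranch c K 0 =
      Fintype.linearCombination ℤ c fun i => branchIntercept (K i) := by
    simp [cellBranch_apply, Fintype.linearCombination_apply]
  have hint := hc.fintypeLinearCombination_injective ((hzero K).symm.trans (h ▸ hzero K'))
  exact funext fun i => Fin.ext (branchIntercept_injective (congrFun hint i))

theorem cellBranch_apply_of_mem_gridCell (c : Fin n → ℝ) (hP : 0 < P) {K : Fin n → Fin P}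
    {x : Fin n → ℝ} (hx : x ∈ gridCell K) :
    cellBranch c K x = ∑ i, triangleWave (P * x i) * c i := by
  rw [cellBranch_apply]
  refine Fintype.sum_congr _ _ fun i => ?_
  rw [triangleWave_eq_of_mem_Icc ((mem_gridCell hP).1 hx i)]

theorem volume_sum_triangleWave_eq_affineMap_le {c : Fin n → ℝ} (hc : LinearIndependent ℤ c)
    (hP : 0 < P) (B : (Fin n → ℝ) →ᵃ[ℝ] ℝ) :
    volume {x ∈ Set.Icc (0 : Fin n → ℝ) 1 | ∑ i, triangleWave (P * x i) * c i = B x} ≤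
      ((P : ℝ≥0∞) ^ n)⁻¹ := by
  refine (measure_mono ?_).trans <| addHaar_iUnion_setOf_affineMap_eq_le volume
    (cellBranch_injective hc) (fun K : Fin n → Fin P => (volume_gridCell hP K).le) B
  rintro x ⟨hx, hxB⟩
  obtain ⟨K, hK⟩ := exists_mem_gridCell hP hx
  exact Set.mem_iUnion.2 ⟨K, hK, (cellBranch_apply_of_mem_gridCell c hP hK).trans hxB⟩

end Cells

theorem relu_network_fineness_general (N : ℕ) (d : ℕ → ℕ) (hd0 : 1 ≤ d 0)
    (hd : ∀ l, 1 ≤ l → l ≤ N → d 0 ≤ d l) :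
    ∃ A : ∀ l : ℕ, (Fin (d l) → ℝ) →ᵃ[ℝ] (Fin (d (l + 1)) → ℝ),
      ∀ (k : Fin (d (N + 1))) (B : (Fin (d 0) → ℝ) →ᵃ[ℝ] ℝ),
        volume {x ∈ Set.Icc (0 : Fin (d 0) → ℝ) 1 | reluNet d A N x k = B x} ≤
          (∏ l ∈ Finset.Icc 1 N, ((d l / d 0 : ℕ) : ℝ≥0∞) ^ (d 0))⁻¹ := by
  have : NeZero (d 0) := ⟨by omega⟩
  obtain ⟨c, hc⟩ := exists_linearIndependent_int_real (d 0)
  refine ⟨foldingLayers d c N, fun k B => ?_⟩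
  have hP : 0 < ∏ l ∈ Finset.Icc 1 N, d l / d 0 := Finset.prod_pos fun l hl =>
    Nat.div_pos (hd l (Finset.mem_Icc.1 hl).1 (Finset.mem_Icc.1 hl).2) hd0
  rw [Finset.prod_pow, ← Nat.cast_prod]
  refine (measure_mono fun x hx => ?_).trans (volume_sum_triangleWave_eq_affineMap_le hc hP B)
  exact ⟨hx.1, (reluNet_foldingLayers c hd hx.1 k).symm.trans hx.2⟩

/-- **Lemma 2**: there is a choice of affine layers of an `L`-layer ReLU network with `d l`
units at the `l`-th layer (`d l ≥ d 0` for `1 ≤ l ≤ L−1`) whose fineness of linear regions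
is at most `∏_{l=1}^{L−1} ⌊d l / d 0⌋^{−d 0}`: the network agrees with no affine map on any
measurable subset of `[0,1]^{d 0}` of measure exceeding this bound. -/
theorem relu_network_fineness (L : ℕ) (hL : 1 ≤ L) (d : ℕ → ℕ)
    (hd0 : 1 ≤ d 0) (hdL : 1 ≤ d L)
    (hd : ∀ l, 1 ≤ l → l ≤ L - 1 → d 0 ≤ d l) :
    ∃ A : ∀ l : ℕ, (Fin (d l) → ℝ) →ᵃ[ℝ] (Fin (d (l + 1)) → ℝ),
      ∀ U : Set (Fin (d 0) → ℝ), U ⊆ Set.pi Set.univ (fun _ => Set.Icc (0 : ℝ) 1) →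
        MeasurableSet U →
        (∏ l ∈ Finset.Icc 1 (L - 1), ((d l / d 0 : ℕ) : ℝ≥0∞) ^ (d 0))⁻¹ < volume U →
        ¬ ∃ B : (Fin (d 0) → ℝ) →ᵃ[ℝ] (Fin (d (L - 1 + 1)) → ℝ),
            ∀ x ∈ U, reluNet d A (L - 1) x = B x := by
  obtain ⟨N, rfl⟩ := Nat.exists_eq_add_of_le' hL
  obtain ⟨A, hA⟩ := relu_network_fineness_general N d hd0 hd
  refine ⟨A, fun U hU _ hvol ⟨B, hB⟩ => hvol.not_ge ?_⟩
  refine (measure_mono fun x hx => ?_).trans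
    (hA ⟨0, hdL⟩ ((LinearMap.proj ⟨0, hdL⟩ : _ →ₗ[ℝ] ℝ).toAffineMap.comp B))
  exact ⟨Set.pi_univ_Icc (0 : Fin (d 0) → ℝ) 1 ▸ hU hx, congrFun (hB x hx) ⟨0, hdL⟩⟩
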